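/- arXiv:1607.05031 — 2 statements merged into one kernel-verified Lean document; each statement's English description precedes it below -/
import Mathlib

section
/- Let G be a finite simple graph with independence number α(G), and let m be a natural number with m > α(G), so that the independent-set system of (G,m) has no common zero over ℂ. Then the minimum degree of a Nullstellensatz certificate for this system equals α(G): there exists a Nullstellensatz certificate of degree α(G), and every Nullstellensatz certificate for the system has degree at least α(G). -/
open MvPolynomial

/-- A finset of vertices is independent: no two of its members are adjacent. -/
def IsIndepFinset {V : Type*} (G : SimpleGraph V) (s : Finset V) : Prop :=
  ∀ u ∈ s, ∀ v ∈ s, ¬ G.Adj u v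

/-- The independence number of `G`: the maximum cardinality of an independent set. -/
noncomputable def indepNum (V : Type*) [Fintype V] (G : SimpleGraph V) : ℕ :=
  sSup {k : ℕ | ∃ s : Finset V, IsIndepFinset G s ∧ s.card = k}

/-- The monomial `x_u · x_v` attached to the edge `{u, v}`. -/
noncomputable def edgeMon {V : Type*} (e : Sym2 V) : MvPolynomial V ℂ :=
  Sym2.lift ⟨fun u v => X u * X v, fun _ _ => mul_comm _ _⟩ e

theorem card_le_indepNum {V : Type*} [Fintype V] (G : SimpleGraph V) {s : Finset V}
    (hs : IsIndepFinset G s) : s.card ≤ indepNum V G := by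
  refine le_csSup ⟨Fintype.card V, ?_⟩ ⟨s, hs, rfl⟩
  rintro k ⟨t, -, rfl⟩
  exact Finset.card_le_univ t

theorem exists_indepNum {V : Type*} [Fintype V] (G : SimpleGraph V) :
    ∃ s : Finset V, IsIndepFinset G s ∧ s.card = indepNum V G := by
  have := Nat.sSup_mem (s := {k : ℕ | ∃ s : Finset V, IsIndepFinset G s ∧ s.card = k})
    ⟨0, ∅, by simp [IsIndepFinset], rfl⟩ ⟨Fintype.card V, by
      rintro k ⟨t, -, rfl⟩
      exact Finset.card_le_univ t⟩
  exact this

/-- Closed form of the alternating sum. -/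
theorem alt_sum_closed {V : Type*} [DecidableEq V] (S : Finset V) : ∀ c : ℂ,
    (∀ i ≤ S.card, c - (i : ℂ) ≠ 0) →
    (∑ T ∈ S.powerset, (-1 : ℂ) ^ T.card * (1 / ((T.card : ℂ) - c))) *
      ∏ i ∈ Finset.range (S.card + 1), (c - (i : ℂ)) =
      - (-1 : ℂ) ^ S.card * (S.card.factorial : ℂ) := by
  induction S using Finset.induction_on with
  | empty =>
    intro c hc
    have h0 := hc 0 (by simp)
    simp at h0 ⊢
    field_simp
  | insert v S hv ih =>
    intro c hc
    rw [Finset.card_insert_of_notMem hv] at hc ⊢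
    rw [Finset.sum_powerset_insert hv]
    have h1 := ih c (fun i hi => hc i (by omega))
    have h2 := ih (c - 1) (fun i hi => by
      have := hc (i + 1) (by omega)
      push_cast at this
      intro h; apply this; linear_combination h)
    have e : ∑ T ∈ S.powerset, (-1 : ℂ) ^ (insert v T).card * (1 / (((insert v T).card : ℂ) - c))
        = - ∑ T ∈ S.powerset, (-1 : ℂ) ^ T.card * (1 / ((T.card : ℂ) - (c - 1))) := by
      rw [← Finset.sum_neg_distrib]
      refine Finset.sum_congr rfl fun T hT => ?_
      have : v ∉ T := fun h => hv (Finset.mem_powerset.1 hT h)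
      rw [Finset.card_insert_of_notMem this]
      push_cast
      rw [show (T.card : ℂ) + 1 - c = (T.card : ℂ) - (c - 1) by ring]
      ring
    rw [e]
    have p1 := Finset.prod_range_succ (fun i : ℕ => c - (i : ℂ)) (S.card + 1)
    have p2 : ∏ i ∈ Finset.range (S.card + 1 + 1), (c - (i : ℂ)) =
        (∏ i ∈ Finset.range (S.card + 1), (c - 1 - (i : ℂ))) * c := by
      rw [Finset.prod_range_succ']
      congr 1
      · refine Finset.prod_congr rfl fun i _ => ?_
        push_cast; ring
      · simp
    rw [add_mul, neg_mul, p1, ← mul_assoc, h1, ← p1, p2, ← mul_assoc, h2, Nat.factorial_succ]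
    push_cast
    ring

/-- The 0/1 point of a finset. -/
noncomputable def indPt {V : Type*} [DecidableEq V] (T : Finset V) : V → ℂ :=
  fun v => if v ∈ T then 1 else 0

theorem alt_sum_eval {V : Type*} [DecidableEq V] (S : Finset V) (A : MvPolynomial V ℂ)
    (hA : A.totalDegree < S.card) :
    ∑ T ∈ S.powerset, (-1 : ℂ) ^ T.card * eval (indPt T) A = 0 := by
  simp_rw [eval_eq, Finset.mul_sum]
  rw [Finset.sum_comm]
  refine Finset.sum_eq_zero fun d hd => ?_
  have hc : d.support.card < S.card := by
    refine lt_of_le_of_lt ?_ hA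
    refine le_trans ?_ (le_totalDegree hd)
    rw [Finsupp.sum, Finset.card_eq_sum_ones]
    refine Finset.sum_le_sum fun i hi => ?_
    have := Finsupp.mem_support_iff.1 hi
    omega
  obtain ⟨v, hvS, hvd⟩ := Finset.exists_mem_notMem_of_card_lt_card hc
  obtain ⟨S', hv, rfl⟩ : ∃ S', v ∉ S' ∧ S = insert v S' :=
    ⟨S.erase v, Finset.notMem_erase _ _, (Finset.insert_erase hvS).symm⟩
  rw [Finset.sum_powerset_insert hv, ← Finset.sum_add_distrib]
  refine Finset.sum_eq_zero fun T hT => ?_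
  have hvT : v ∉ T := fun h => hv (Finset.mem_powerset.1 hT h)
  have : ∏ i ∈ d.support, indPt (insert v T) i ^ d i = ∏ i ∈ d.support, indPt T i ^ d i := by
    refine Finset.prod_congr rfl fun i hi => ?_
    have : i ≠ v := fun h => hvd (h ▸ hi)
    simp [indPt, this]
  rw [this, Finset.card_insert_of_notMem hvT]
  ring

theorem lower_bound {V : Type*} [Fintype V] [DecidableEq V] (G : SimpleGraph V)
    [DecidableRel G.Adj] (m : ℕ) (hm : indepNum V G < m)
    (A : MvPolynomial V ℂ) (Q : Sym2 V → MvPolynomial V ℂ) (P : V → MvPolynomial V ℂ)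
    (h : A * ((∑ v : V, X v) - (m : MvPolynomial V ℂ)) +
          (∑ e ∈ G.edgeFinset, Q e * edgeMon e) +
          (∑ v : V, P v * ((X v) ^ 2 - X v)) = 1) : indepNum V G ≤ A.totalDegree := by
  by_contra! hlt
  obtain ⟨S, hS, hcard⟩ := exists_indepNum G
  rw [← hcard] at hlt hm
  have h0 := alt_sum_eval S A hlt
  have h1 := alt_sum_closed S (m : ℂ) (fun i hi => by
    rw [sub_ne_zero]; exact_mod_cast (by omega : m ≠ i))
  have key : ∀ T ∈ S.powerset, eval (indPt T) A = 1 / ((T.card : ℂ) - m) := by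
    intro T hT
    have hTS := Finset.mem_powerset.1 hT
    have := congrArg (eval (indPt T)) h
    have he : ∀ e ∈ G.edgeFinset, eval (indPt T) (Q e * edgeMon e) = 0 := by
      intro e he
      induction e using Sym2.ind with
      | _ u v =>
        have hadj : G.Adj u v := by simpa using he
        by_cases hu : u ∈ T
        · by_cases hv : v ∈ T
          · exact absurd hadj (hS u (hTS hu) v (hTS hv))
          · simp [edgeMon, indPt, hv]
        · simp [edgeMon, indPt, hu]
    have hp : ∀ v, eval (indPt T) (P v * ((X v) ^ 2 - X v)) = 0 := by
      intro v
      by_cases hv : v ∈ T <;> simp [indPt, hv]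
    rw [map_add, map_add, map_sum, map_sum, Finset.sum_eq_zero he,
      Finset.sum_eq_zero (fun v _ => hp v)] at this
    have hs : eval (indPt T) ((∑ v : V, X v) - (m : MvPolynomial V ℂ)) = (T.card : ℂ) - m := by
      simp [indPt]
    rw [map_mul, hs, map_one, add_zero, add_zero] at this
    exact eq_one_div_of_mul_eq_one_left this
  rw [Finset.sum_congr rfl (fun T hT => by rw [key T hT])] at h0
  rw [h0, zero_mul] at h1
  have : (S.card.factorial : ℂ) ≠ 0 := by exact_mod_cast Nat.factorial_ne_zero _
  simp [this] at h1

/-- Combinations of edge and boolean polynomials with multipliers of degree at most `k`. -/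
noncomputable def lowComb {V : Type*} [Fintype V] [DecidableEq V] (G : SimpleGraph V)
    [DecidableRel G.Adj] (k : ℕ) : Submodule ℂ (MvPolynomial V ℂ) where
  carrier := {p | ∃ (Q : Sym2 V → MvPolynomial V ℂ) (P : V → MvPolynomial V ℂ),
    (∑ e ∈ G.edgeFinset, Q e * edgeMon e) + (∑ v : V, P v * ((X v) ^ 2 - X v)) = p ∧
    (∀ e, (Q e).totalDegree ≤ k) ∧ (∀ v, (P v).totalDegree ≤ k)}
  zero_mem' := ⟨0, 0, by simp, by simp, by simp⟩
  add_mem' := by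
    rintro a b ⟨Q, P, rfl, hQ, hP⟩ ⟨Q', P', rfl, hQ', hP'⟩
    refine ⟨Q + Q', P + P', ?_, fun e => ?_, fun v => ?_⟩
    · simp only [Pi.add_apply, add_mul, Finset.sum_add_distrib]
      ring
    · exact (totalDegree_add _ _).trans (max_le (hQ e) (hQ' e))
    · exact (totalDegree_add _ _).trans (max_le (hP v) (hP' v))
  smul_mem' := by
    rintro c a ⟨Q, P, rfl, hQ, hP⟩
    refine ⟨fun e => c • Q e, fun v => c • P v, ?_, fun e => ?_, fun v => ?_⟩
    · simp only [smul_mul_assoc, ← Finset.smul_sum, smul_add]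
    · exact (totalDegree_smul_le _ _).trans (hQ e)
    · exact (totalDegree_smul_le _ _).trans (hP v)

theorem edge_mem_lowComb {V : Type*} [Fintype V] [DecidableEq V] (G : SimpleGraph V)
    [DecidableRel G.Adj] (k : ℕ) (q : MvPolynomial V ℂ) (hq : q.totalDegree ≤ k) (u v : V)
    (huv : G.Adj u v) : q * (X u * X v) ∈ lowComb G k := by
  refine ⟨Pi.single s(u, v) q, 0, ?_, fun e => ?_, by simp⟩
  · rw [Finset.sum_eq_single s(u, v)]
    · simp [edgeMon]
    · intro e _ he
      simp [he]
    · intro h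
      simp [huv] at h
  · by_cases he : e = s(u, v)
    · subst he; simpa using hq
    · simp [he]

theorem bool_mem_lowComb {V : Type*} [Fintype V] [DecidableEq V] (G : SimpleGraph V)
    [DecidableRel G.Adj] (k : ℕ) (q : MvPolynomial V ℂ) (hq : q.totalDegree ≤ k) (v : V) :
    q * (X v ^ 2 - X v) ∈ lowComb G k := by
  refine ⟨0, Pi.single v q, ?_, by simp, fun w => ?_⟩
  · rw [Finset.sum_eq_single v]
    · simp
    · intro e _ he
      simp [he]
    · simp
  · by_cases he : w = v
    · subst he; simpa using hq
    · simp [he]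

/-- Squarefree monomial. -/
noncomputable def sqMon {V : Type*} (S : Finset V) : MvPolynomial V ℂ := ∏ v ∈ S, X v

theorem sqMon_deg {V : Type*} (S : Finset V) : (sqMon S).totalDegree ≤ S.card := by
  refine (totalDegree_finsetProd _ _).trans ?_
  simp

open Classical in
/-- Squarefree monomial of an independent set, zero otherwise. -/
noncomputable def indMon {V : Type*} (G : SimpleGraph V) (S : Finset V) : MvPolynomial V ℂ :=
  if IsIndepFinset G S then sqMon S else 0

theorem mul_X_mem {V : Type*} [Fintype V] [DecidableEq V] (G : SimpleGraph V)
    [DecidableRel G.Adj] (S : Finset V) (v : V) :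
    indMon G S * X v - indMon G (insert v S) ∈ lowComb G (indepNum V G) := by
  by_cases hS : IsIndepFinset G S
  swap
  · have : ¬ IsIndepFinset G (insert v S) := fun h => hS fun a ha b hb =>
      h a (Finset.mem_insert_of_mem ha) b (Finset.mem_insert_of_mem hb)
    simp [indMon, hS, this]
  have hdeg : ∀ u ∈ S, (sqMon (S.erase u)).totalDegree ≤ indepNum V G := fun u hu =>
    (sqMon_deg _).trans ((Finset.card_le_card (Finset.erase_subset _ _)).trans
      (card_le_indepNum G hS))
  have hfac : ∀ u ∈ S, sqMon S = X u * sqMon (S.erase u) := fun u hu =>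
    (Finset.mul_prod_erase S (fun v => (X v : MvPolynomial V ℂ)) hu).symm
  by_cases hv : v ∈ S
  · rw [Finset.insert_eq_of_mem hv]
    simp only [indMon, hS, if_true]
    convert bool_mem_lowComb G _ _ (hdeg v hv) v using 1
    rw [hfac v hv]; ring
  by_cases hi : IsIndepFinset G (insert v S)
  · simp only [indMon, hS, hi, if_true]
    rw [sqMon, sqMon, Finset.prod_insert hv]
    convert Submodule.zero_mem _ using 1
    ring
  · simp only [indMon, hS, hi, if_true, if_false, sub_zero]
    obtain ⟨u, hu, huv⟩ : ∃ u ∈ S, G.Adj u v := by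
      by_contra! hcon
      apply hi
      intro a ha b hb hab
      rcases Finset.mem_insert.1 ha with rfl | ha2
      · rcases Finset.mem_insert.1 hb with rfl | hb2
        · exact G.loopless.irrefl _ hab
        · exact hcon b hb2 hab.symm
      · rcases Finset.mem_insert.1 hb with rfl | hb2
        · exact hcon a ha2 hab
        · exact hS a ha2 b hb2 hab
    convert edge_mem_lowComb G _ _ (hdeg u hu) u v huv using 1
    rw [hfac u hu]; ring

/-- Coefficients of the certificate. -/
noncomputable def certCoeff (m : ℕ) : ℕ → ℂ
  | 0 => - 1 / m
  | k + 1 => certCoeff m k * (k + 1) / (m - (k + 1))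

theorem cert_sum {V : Type*} [Fintype V] [DecidableEq V] (G : SimpleGraph V)
    (m : ℕ) (hm : indepNum V G < m) :
    ∑ S : Finset V, certCoeff m S.card • (∑ v : V, indMon G (insert v S) - (m : ℂ) • indMon G S)
      = 1 := by
  have hpart : ∑ S : Finset V, certCoeff m S.card • ∑ v : V, indMon G (insert v S) =
      ∑ S : Finset V, ((S.card : ℂ) * (certCoeff m S.card + certCoeff m (S.card - 1))) •
        indMon G S := by
    have h1 : ∑ S : Finset V, certCoeff m S.card • ∑ v : V, indMon G (insert v S) =
        ∑ v : V, ∑ S : Finset V, certCoeff m S.card • indMon G (insert v S) := by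
      rw [Finset.sum_comm]
      simp_rw [Finset.smul_sum]
    have h2 : ∀ v : V, ∑ S : Finset V, certCoeff m S.card • indMon G (insert v S) =
        ∑ S : Finset V, if v ∈ S then
          (certCoeff m S.card + certCoeff m (S.card - 1)) • indMon G S else 0 := by
      intro v
      rw [← Finset.sum_filter_add_sum_filter_not Finset.univ (fun S : Finset V => v ∈ S),
        ← Finset.sum_filter]
      simp_rw [add_smul]
      rw [Finset.sum_add_distrib]
      congr 1
      · refine Finset.sum_congr rfl fun S hS => ?_
        rw [Finset.insert_eq_of_mem (by simpa using hS)]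
      · refine Finset.sum_bij' (fun S _ => insert v S) (fun S _ => S.erase v) ?_ ?_ ?_ ?_ ?_
        · simp
        · simp
        · intro S hS
          exact Finset.erase_insert (by simpa using hS)
        · intro S hS
          exact Finset.insert_erase (by simpa using hS)
        · intro S hS
          rw [Finset.card_insert_of_notMem (by simpa using hS)]
          simp
    rw [h1, Finset.sum_congr rfl (fun v _ => h2 v), Finset.sum_comm]
    refine Finset.sum_congr rfl fun S _ => ?_
    rw [← Finset.sum_filter, Finset.sum_const, ← Nat.cast_smul_eq_nsmul ℂ, smul_smul]
    simp
  simp_rw [smul_sub]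
  rw [Finset.sum_sub_distrib, hpart, ← Finset.sum_sub_distrib, Finset.sum_eq_single ∅]
  · have : (m : ℂ) ≠ 0 := by exact_mod_cast (by omega : m ≠ 0)
    have h0 : IsIndepFinset G ∅ := by simp [IsIndepFinset]
    simp only [Finset.card_empty, Nat.cast_zero, zero_mul, zero_smul, certCoeff, indMon, h0,
      if_true, sqMon, Finset.prod_empty, smul_smul, zero_sub]
    rw [← neg_smul]
    have : -((-1 / (m : ℂ)) * m) = 1 := by field_simp
    rw [this, one_smul]
  · intro S _ hS
    by_cases hi : IsIndepFinset G S
    · have hle := card_le_indepNum G hi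
      obtain ⟨k, hk⟩ : ∃ k, S.card = k + 1 :=
        Nat.exists_eq_succ_of_ne_zero (by simpa using hS)
      have hne : (m : ℂ) - ((k : ℂ) + 1) ≠ 0 := by
        rw [sub_ne_zero]; exact_mod_cast (by omega : m ≠ k + 1)
      rw [smul_smul, ← sub_smul, hk]
      have : (((k + 1 : ℕ) : ℂ) * (certCoeff m (k + 1) + certCoeff m (k + 1 - 1)) -
          certCoeff m (k + 1) * m) = 0 := by
        simp only [certCoeff, Nat.add_sub_cancel]
        push_cast
        field_simp
        ring
      rw [this, zero_smul]
    · simp [indMon, hi]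
  · simp

theorem upper_bound {V : Type*} [Fintype V] [DecidableEq V] (G : SimpleGraph V)
    [DecidableRel G.Adj] (m : ℕ) (hm : indepNum V G < m) :
    ∃ (A : MvPolynomial V ℂ) (Q : Sym2 V → MvPolynomial V ℂ) (P : V → MvPolynomial V ℂ),
      A * ((∑ v : V, X v) - (m : MvPolynomial V ℂ)) +
          (∑ e ∈ G.edgeFinset, Q e * edgeMon e) +
          (∑ v : V, P v * ((X v) ^ 2 - X v)) = 1 ∧
      A.totalDegree ≤ indepNum V G ∧ (∀ e, (Q e).totalDegree ≤ indepNum V G) ∧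
      (∀ v, (P v).totalDegree ≤ indepNum V G) := by
  set A : MvPolynomial V ℂ := ∑ S : Finset V, certCoeff m S.card • indMon G S with hA
  have hmem : A * ((∑ v : V, X v) - (m : MvPolynomial V ℂ)) - 1 ∈ lowComb G (indepNum V G) := by
    rw [← cert_sum G m hm, hA, Finset.sum_mul, ← Finset.sum_sub_distrib]
    refine Submodule.sum_mem _ fun S _ => ?_
    rw [smul_mul_assoc, ← smul_sub]
    refine Submodule.smul_mem _ _ ?_
    have : indMon G S * ((∑ v : V, X v) - (m : MvPolynomial V ℂ)) -
        (∑ v : V, indMon G (insert v S) - (m : ℂ) • indMon G S) =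
        ∑ v : V, (indMon G S * X v - indMon G (insert v S)) := by
      rw [Finset.sum_sub_distrib, ← Finset.mul_sum, smul_eq_C_mul]
      simp only [map_natCast]
      ring
    rw [this]
    exact Submodule.sum_mem _ fun v _ => mul_X_mem G S v
  have hmem' := Submodule.neg_mem _ hmem
  obtain ⟨Q, P, h, hQ, hP⟩ := hmem'
  refine ⟨A, Q, P, ?_, ?_, hQ, hP⟩
  · rw [add_assoc, h]; ring
  · refine totalDegree_finsetSum_le fun S _ => ?_
    refine (totalDegree_smul_le _ _).trans ?_
    by_cases hi : IsIndepFinset G S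
    · simp only [indMon, hi, if_true]
      exact (sqMon_deg S).trans (card_le_indepNum G hi)
    · simp [indMon, hi]

/-- If `m > α(G)` (so the independent-set system of `(G,m)` is
infeasible over `ℂ`), then the minimum degree of a Nullstellensatz certificate
for the system equals `α(G)`: a certificate of degree `α(G)` exists, and every
certificate has degree at least `α(G)`. -/
theorem stmt1 {V : Type*} [Fintype V] [DecidableEq V] (G : SimpleGraph V)
    [DecidableRel G.Adj] (m : ℕ) (hm : indepNum V G < m) :
    (∃ (A : MvPolynomial V ℂ) (Q : Sym2 V → MvPolynomial V ℂ)
        (P : V → MvPolynomial V ℂ),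
      A * ((∑ v : V, X v) - (m : MvPolynomial V ℂ)) +
          (∑ e ∈ G.edgeFinset, Q e * edgeMon e) +
          (∑ v : V, P v * ((X v) ^ 2 - X v)) = 1 ∧
      max A.totalDegree
        (max (G.edgeFinset.sup fun e => (Q e).totalDegree)
          (Finset.univ.sup fun v => (P v).totalDegree)) = indepNum V G) ∧
    (∀ (A : MvPolynomial V ℂ) (Q : Sym2 V → MvPolynomial V ℂ)
        (P : V → MvPolynomial V ℂ),
      A * ((∑ v : V, X v) - (m : MvPolynomial V ℂ)) +
          (∑ e ∈ G.edgeFinset, Q e * edgeMon e) +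
          (∑ v : V, P v * ((X v) ^ 2 - X v)) = 1 →
      indepNum V G ≤
        max A.totalDegree
          (max (G.edgeFinset.sup fun e => (Q e).totalDegree)
            (Finset.univ.sup fun v => (P v).totalDegree))) := by
  have hlow := fun A Q P h => (lower_bound G m hm A Q P h).trans (le_max_left A.totalDegree
    (max (G.edgeFinset.sup fun e => (Q e).totalDegree)
          (Finset.univ.sup fun v => (P v).totalDegree)))
  refine ⟨?_, hlow⟩
  obtain ⟨A, Q, P, h, hA, hQ, hP⟩ := upper_bound G m hm
  exact ⟨A, Q, P, h, le_antisymm (max_le hA (max_le (Finset.sup_le fun e _ => hQ e)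
    (Finset.sup_le fun v _ => hP v))) (hlow A Q P h)⟩
end

section
/- Let G be a finite simple graph with an even number 2m of vertices, and work in the polynomial ring ℂ[x_e : e ∈ E(G)]. Let I₁ be the ideal generated by the perfect-matching polynomials (∑_{e∋v} x_e) − 1 for each vertex v, together with x_e·x_{e'} for each pair of distinct edges e, e' sharing a vertex. Let I₂ be the ideal generated by x_e² − x_e for each edge e, x_e·x_{e'} for each pair of distinct edges sharing a vertex, and (∑_{e∈E(G)} x_e) − m. Then: (i) x_e² − x_e ∈ I₁ for every edge e; (ii) both I₁ and I₂ are radical ideals; and (iii) I₁ = I₂. -/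
open MvPolynomial Finset

/-- The perfect-matching vertex polynomial `(∑_{e ∋ v} x_e) − 1`. -/
noncomputable def pmVertexPoly {V : Type*} [Fintype V] [DecidableEq V]
    (G : SimpleGraph V) [DecidableRel G.Adj] (v : V) :
    MvPolynomial ↥G.edgeSet ℂ :=
  (∑ e ∈ Finset.univ.filter (fun e : ↥G.edgeSet => v ∈ (e : Sym2 V)), X e) - 1


theorem aux_mem {σ : Type*} [Fintype σ] [DecidableEq σ] (I : Ideal (MvPolynomial σ ℂ))
    (hI : ∀ e, (X e : MvPolynomial σ ℂ) ^ 2 - X e ∈ I) (h : MvPolynomial σ ℂ)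
    (hh : ∀ a : σ → ℂ, (∀ g ∈ I, eval a g = 0) → eval a h = 0) : h ∈ I := by
  let d : Finset σ → MvPolynomial σ ℂ := fun S =>
    (∏ e ∈ S, X e) * ∏ e ∈ Finset.univ \ S, (1 - X e)
  let a : Finset σ → σ → ℂ := fun S e => if e ∈ S then 1 else 0
  have hd : ∑ S ∈ (Finset.univ : Finset σ).powerset, d S = 1 := by
    have := Finset.prod_add (fun e : σ => (X e : MvPolynomial σ ℂ)) (fun e => 1 - X e) Finset.univ
    simp only [d]
    rw [← this]
    simp
  have hX : ∀ S e, (X e - C (a S e)) * d S ∈ I := by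
    intro S e
    by_cases he : e ∈ S
    · simp only [d, a, he, if_true]
      rw [← Finset.mul_prod_erase S _ he]
      have : (X e - C 1) * (X e * (∏ x ∈ S.erase e, X x) * ∏ e ∈ Finset.univ \ S, (1 - X e)) =
        ((∏ x ∈ S.erase e, X x) * ∏ e ∈ Finset.univ \ S, (1 - X e)) * ((X e : MvPolynomial σ ℂ) ^ 2 - X e) := by
        rw [C_1]; ring
      rw [this]
      exact I.mul_mem_left _ (hI e)
    · simp only [d, a, he, if_false]
      have he' : e ∈ Finset.univ \ S := by simp [he]
      rw [← Finset.mul_prod_erase (Finset.univ \ S) _ he']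
      have : (X e - C 0) * ((∏ x ∈ S, X x) * ((1 - X e) * ∏ x ∈ (Finset.univ \ S).erase e, (1 - X x))) =
        (-((∏ x ∈ S, X x) * ∏ x ∈ (Finset.univ \ S).erase e, (1 - X x))) * ((X e : MvPolynomial σ ℂ) ^ 2 - X e) := by
        rw [C_0]; ring
      rw [this]
      exact I.mul_mem_left _ (hI e)
  have hg : ∀ S g, (g - C (eval (a S) g)) * d S ∈ I := by
    intro S g
    induction g using MvPolynomial.induction_on with
    | C c => simp
    | add p q hp hq =>
      have := I.add_mem hp hq
      convert this using 1
      simp only [map_add]; ring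
    | mul_X p e hp =>
      have := I.add_mem (I.mul_mem_left (X e) hp) (I.mul_mem_left (C (eval (a S) p)) (hX S e))
      convert this using 1
      simp only [map_mul, eval_X]; ring
  have key : ∀ S, h * d S ∈ I := by
    intro S
    by_cases hS : d S ∈ I
    · exact I.mul_mem_left _ hS
    · have h0 : eval (a S) h = 0 := by
        apply hh
        intro g hgI
        by_contra hne
        apply hS
        have h1 := I.sub_mem (I.mul_mem_right (d S) hgI) (hg S g)
        have h2 := I.mul_mem_left (C (eval (a S) g)⁻¹) h1
        convert h2 using 1
        have h3 : C (eval (a S) g)⁻¹ * C (eval (a S) g) = (1 : MvPolynomial σ ℂ) := by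
          rw [← C_mul, inv_mul_cancel₀ hne, C_1]
        linear_combination (-(d S)) * h3
      have := hg S h
      simpa [h0] using this
  have : h = ∑ S ∈ (Finset.univ : Finset σ).powerset, h * d S := by
    rw [← Finset.mul_sum, hd, mul_one]
  rw [this]
  exact I.sum_mem fun S _ => key S

theorem aux_radical {σ : Type*} [Fintype σ] [DecidableEq σ] (I : Ideal (MvPolynomial σ ℂ))
    (hI : ∀ e, (X e : MvPolynomial σ ℂ) ^ 2 - X e ∈ I) : I.IsRadical := by
  rintro g ⟨n, hn⟩
  refine aux_mem I hI g fun a ha => ?_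
  have := ha _ hn
  rw [map_pow] at this
  by_contra hne; exact pow_ne_zero n hne this

theorem aux_double {V : Type*} [Fintype V] [DecidableEq V] (G : SimpleGraph V)
    [DecidableRel G.Adj] (a : ↥G.edgeSet → ℂ) :
    ∑ v : V, ∑ e ∈ Finset.univ.filter (fun e : ↥G.edgeSet => v ∈ (e : Sym2 V)), a e =
      2 * ∑ e, a e := by
  simp_rw [Finset.sum_filter]
  rw [Finset.sum_comm, Finset.mul_sum]
  refine Finset.sum_congr rfl fun e _ => ?_
  rw [← Finset.sum_filter, Finset.sum_const]
  have : (Finset.univ.filter (fun v : V => v ∈ (e : Sym2 V))).card = 2 := by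
    obtain ⟨e, he⟩ := e
    induction e using Sym2.ind with
    | _ x y =>
      have hxy : x ≠ y := G.ne_of_adj he
      rw [← Finset.card_pair hxy]
      congr 1
      ext v
      simp
  rw [this]
  simp

theorem aux_vertex {V : Type*} [Fintype V] [DecidableEq V] (G : SimpleGraph V)
    [DecidableRel G.Adj] (m : ℕ) (hcard : Fintype.card V = 2 * m) (a : ↥G.edgeSet → ℂ)
    (h1 : ∀ e, a e ^ 2 - a e = 0)
    (h2 : ∀ e₁ e₂ : ↥G.edgeSet, e₁ ≠ e₂ → (∃ v : V, v ∈ (e₁ : Sym2 V) ∧ v ∈ (e₂ : Sym2 V)) →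
      a e₁ * a e₂ = 0)
    (h3 : ∑ e, a e = m) (v : V) :
    ∑ e ∈ Finset.univ.filter (fun e : ↥G.edgeSet => v ∈ (e : Sym2 V)), a e = 1 := by
  let s : V → ℂ := fun v => ∑ e ∈ Finset.univ.filter (fun e : ↥G.edgeSet => v ∈ (e : Sym2 V)), a e
  have hs : ∀ v, s v * s v = s v := by
    intro v
    simp only [s]
    rw [Finset.sum_mul]
    refine Finset.sum_congr rfl fun e he => ?_
    rw [Finset.mul_sum, Finset.sum_eq_single e]
    · linear_combination h1 e
    · intro e' he' hne
      simp only [Finset.mem_filter, Finset.mem_univ, true_and] at he he'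
      exact h2 e e' hne.symm ⟨v, he, he'⟩
    · exact fun h => absurd he h
  have hs' : ∀ v, s v = 0 ∨ s v = 1 := by
    intro v
    have : s v * (s v - 1) = 0 := by linear_combination hs v
    rcases mul_eq_zero.mp this with h | h
    · exact Or.inl h
    · exact Or.inr (by linear_combination h)
  have hsum : ∑ v, (1 - s v) = 0 := by
    rw [Finset.sum_sub_distrib, aux_double G a, h3]
    simp [hcard]
  have hre : ∑ v, (1 - s v).re = 0 := by
    rw [← Complex.re_sum, hsum, Complex.zero_re]
  have hnn : ∀ v ∈ Finset.univ, 0 ≤ (1 - s v).re := by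
    intro v _
    rcases hs' v with h | h <;> simp [h]
  have := (Finset.sum_eq_zero_iff_of_nonneg hnn).mp hre v (Finset.mem_univ v)
  rcases hs' v with h | h
  · simp [h] at this
  · exact h

theorem aux_i {V : Type*} [Fintype V] [DecidableEq V] (G : SimpleGraph V)
    [DecidableRel G.Adj] (I : Ideal (MvPolynomial ↥G.edgeSet ℂ))
    (h1 : ∀ v, pmVertexPoly G v ∈ I)
    (h2 : ∀ e₁ e₂ : ↥G.edgeSet, e₁ ≠ e₂ → (∃ v : V, v ∈ (e₁ : Sym2 V) ∧ v ∈ (e₂ : Sym2 V)) →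
      X e₁ * X e₂ ∈ I) (e : ↥G.edgeSet) :
    (X e : MvPolynomial ↥G.edgeSet ℂ) ^ 2 - X e ∈ I := by
  obtain ⟨v, hv⟩ : ∃ v, v ∈ (e : Sym2 V) := ⟨_, Sym2.out_fst_mem _⟩
  have hmem : e ∈ Finset.univ.filter (fun e : ↥G.edgeSet => v ∈ (e : Sym2 V)) := by simp [hv]
  have ha := I.mul_mem_left (X e) (h1 v)
  have hb : ∑ e' ∈ (Finset.univ.filter (fun e : ↥G.edgeSet => v ∈ (e : Sym2 V))).erase e,
      (X e * X e' : MvPolynomial ↥G.edgeSet ℂ) ∈ I := by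
    refine I.sum_mem fun e' he' => ?_
    simp only [Finset.mem_erase, Finset.mem_filter, Finset.mem_univ, true_and] at he'
    exact h2 e e' (Ne.symm he'.1) ⟨v, hv, he'.2⟩
  convert I.sub_mem ha hb using 1
  rw [pmVertexPoly, ← Finset.add_sum_erase _ _ hmem, ← Finset.mul_sum]
  ring

/-- For a graph with `2m` vertices, with
`I₁ = ⟨(∑_{e∋v} x_e) − 1 (v ∈ V), x_e x_{e'} (e ≠ e' sharing a vertex)⟩` and
`I₂ = ⟨x_e² − x_e, x_e x_{e'} (e ≠ e' sharing a vertex), (∑_e x_e) − m⟩`: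
(i) every `x_e² − x_e` lies in `I₁`; (ii) `I₁` and `I₂` are radical;
(iii) `I₁ = I₂`. -/
theorem stmt16 {V : Type*} [Fintype V] [DecidableEq V] (G : SimpleGraph V)
    [DecidableRel G.Adj] (m : ℕ) (hcard : Fintype.card V = 2 * m) :
    (∀ e : ↥G.edgeSet,
      ((X e : MvPolynomial ↥G.edgeSet ℂ) ^ 2 - X e) ∈
        Ideal.span
          ({g : MvPolynomial ↥G.edgeSet ℂ | ∃ v : V, g = pmVertexPoly G v} ∪
            {g : MvPolynomial ↥G.edgeSet ℂ | ∃ e₁ e₂ : ↥G.edgeSet, e₁ ≠ e₂ ∧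
              (∃ v : V, v ∈ (e₁ : Sym2 V) ∧ v ∈ (e₂ : Sym2 V)) ∧
              g = X e₁ * X e₂})) ∧
    (Ideal.span
        ({g : MvPolynomial ↥G.edgeSet ℂ | ∃ v : V, g = pmVertexPoly G v} ∪
          {g : MvPolynomial ↥G.edgeSet ℂ | ∃ e₁ e₂ : ↥G.edgeSet, e₁ ≠ e₂ ∧
            (∃ v : V, v ∈ (e₁ : Sym2 V) ∧ v ∈ (e₂ : Sym2 V)) ∧
            g = X e₁ * X e₂})).IsRadical ∧
    (Ideal.span
        ({g : MvPolynomial ↥G.edgeSet ℂ | ∃ e : ↥G.edgeSet,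
            g = (X e) ^ 2 - X e} ∪
          {g : MvPolynomial ↥G.edgeSet ℂ | ∃ e₁ e₂ : ↥G.edgeSet, e₁ ≠ e₂ ∧
            (∃ v : V, v ∈ (e₁ : Sym2 V) ∧ v ∈ (e₂ : Sym2 V)) ∧
            g = X e₁ * X e₂} ∪
          {(∑ e : ↥G.edgeSet, X e) -
            (m : MvPolynomial ↥G.edgeSet ℂ)})).IsRadical ∧
    Ideal.span
        ({g : MvPolynomial ↥G.edgeSet ℂ | ∃ v : V, g = pmVertexPoly G v} ∪
        {g : MvPolynomial ↥G.edgeSet ℂ | ∃ e₁ e₂ : ↥G.edgeSet, e₁ ≠ e₂ ∧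
          (∃ v : V, v ∈ (e₁ : Sym2 V) ∧ v ∈ (e₂ : Sym2 V)) ∧
          g = X e₁ * X e₂}) =
      Ideal.span
        ({g : MvPolynomial ↥G.edgeSet ℂ | ∃ e : ↥G.edgeSet,
            g = (X e) ^ 2 - X e} ∪
          {g : MvPolynomial ↥G.edgeSet ℂ | ∃ e₁ e₂ : ↥G.edgeSet, e₁ ≠ e₂ ∧
            (∃ v : V, v ∈ (e₁ : Sym2 V) ∧ v ∈ (e₂ : Sym2 V)) ∧
            g = X e₁ * X e₂} ∪
          {(∑ e : ↥G.edgeSet, X e) -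
            (m : MvPolynomial ↥G.edgeSet ℂ)}) := by
  set I₁ := Ideal.span
        ({g : MvPolynomial ↥G.edgeSet ℂ | ∃ v : V, g = pmVertexPoly G v} ∪
        {g : MvPolynomial ↥G.edgeSet ℂ | ∃ e₁ e₂ : ↥G.edgeSet, e₁ ≠ e₂ ∧
          (∃ v : V, v ∈ (e₁ : Sym2 V) ∧ v ∈ (e₂ : Sym2 V)) ∧
          g = X e₁ * X e₂}) with hI₁
  set I₂ := Ideal.span
        ({g : MvPolynomial ↥G.edgeSet ℂ | ∃ e : ↥G.edgeSet,
            g = (X e) ^ 2 - X e} ∪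
          {g : MvPolynomial ↥G.edgeSet ℂ | ∃ e₁ e₂ : ↥G.edgeSet, e₁ ≠ e₂ ∧
            (∃ v : V, v ∈ (e₁ : Sym2 V) ∧ v ∈ (e₂ : Sym2 V)) ∧
            g = X e₁ * X e₂} ∪
          {(∑ e : ↥G.edgeSet, X e) -
            (m : MvPolynomial ↥G.edgeSet ℂ)}) with hI₂
  have a1 : ∀ v, pmVertexPoly G v ∈ I₁ := fun v => Ideal.subset_span (Or.inl ⟨v, rfl⟩)
  have a2 : ∀ e₁ e₂ : ↥G.edgeSet, e₁ ≠ e₂ →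
      (∃ v : V, v ∈ (e₁ : Sym2 V) ∧ v ∈ (e₂ : Sym2 V)) → X e₁ * X e₂ ∈ I₁ :=
    fun e₁ e₂ h h' => Ideal.subset_span (Or.inr ⟨e₁, e₂, h, h', rfl⟩)
  have a3 := aux_i G I₁ a1 a2
  have b1 : ∀ e, (X e : MvPolynomial ↥G.edgeSet ℂ) ^ 2 - X e ∈ I₂ :=
    fun e => Ideal.subset_span (Or.inl (Or.inl ⟨e, rfl⟩))
  have b2 : ∀ e₁ e₂ : ↥G.edgeSet, e₁ ≠ e₂ →
      (∃ v : V, v ∈ (e₁ : Sym2 V) ∧ v ∈ (e₂ : Sym2 V)) → X e₁ * X e₂ ∈ I₂ :=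
    fun e₁ e₂ h h' => Ideal.subset_span (Or.inl (Or.inr ⟨e₁, e₂, h, h', rfl⟩))
  have b3 : (∑ e : ↥G.edgeSet, X e) - (m : MvPolynomial ↥G.edgeSet ℂ) ∈ I₂ :=
    Ideal.subset_span (Or.inr rfl)
  refine ⟨a3, aux_radical _ a3, aux_radical _ b1, le_antisymm ?_ ?_⟩
  · rw [hI₁, Ideal.span_le]
    rintro g (⟨v, rfl⟩ | ⟨e₁, e₂, h, h', rfl⟩)
    · refine aux_mem I₂ b1 _ fun a ha => ?_
      have := aux_vertex G m hcard a (fun e => by simpa using ha _ (b1 e))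
        (fun e₁ e₂ h h' => by simpa using ha _ (b2 e₁ e₂ h h'))
        (by simpa [sub_eq_zero] using ha _ b3) v
      simp [pmVertexPoly, this]
    · exact b2 e₁ e₂ h h'
  · rw [hI₂, Ideal.span_le]
    rintro g ((⟨e, rfl⟩ | ⟨e₁, e₂, h, h', rfl⟩) | rfl)
    · exact a3 e
    · exact a2 e₁ e₂ h h'
    · refine aux_mem I₁ a3 _ fun a ha => ?_
      have hv : ∀ v, ∑ e ∈ Finset.univ.filter (fun e : ↥G.edgeSet => v ∈ (e : Sym2 V)), a e = 1 :=
        fun v => by simpa [pmVertexPoly, sub_eq_zero] using ha _ (a1 v)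
      have h2 := aux_double G a
      simp only [hv, Finset.sum_const, Finset.card_univ, hcard, nsmul_eq_mul] at h2
      push_cast at h2
      have : ∑ e, a e = m := by linear_combination (-1/2) * h2
      simp [this]
end
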